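/- Let G be a graph with m edges and let {x_u : u ∈ V(G)} be non-zero vectors in R^N. Then G has a cut of size at least m/2 − (1/π)·Σ_{uv∈E(G)} arcsin( ⟨x_u, x_v⟩ / (‖x_u‖·‖x_v‖) ). -/

import Mathlib

open Finset SimpleGraph RealInnerProductSpace

/-- `epairs G A B` is the number of ordered pairs `(u,v) ∈ A × B` with `u ~ v`;
for disjoint `A`, `B` this is the number of edges between `A` and `B`. -/
def epairs {V : Type*} [DecidableEq V] (G : SimpleGraph V) [DecidableRel G.Adj]
    (A B : Finset V) : ℕ :=
  ((A ×ˢ B).filter fun p => G.Adj p.1 p.2).card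

/-!
Let `ω` be a centred Gaussian vector indexed by `V` whose covariance matrix is the Gram matrix of
`x`, and put `v` in `A` when `ω v > 0`. By Sheppard's formula an edge `uv` is cut with probability
`angle (x u) (x v) / π = 1 / 2 - arcsin (…) / π`, so the claimed bound is the expected size of the
cut `(A, Aᶜ)`, and some outcome attains at least its expectation. Sheppard's formula reduces to the
standard Gaussian measure of the plane, because a Gaussian law is determined by its mean and
covariance; there rotation invariance turns it into the length of two arcs of the circle.
-/

open MeasureTheory ProbabilityTheory
open scoped symmDiff

-- Average `μ (e ^ (iα) • S)` over the angle `α` and exchange the order of integration.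
lemma measure_eq_haarAddCircle_of_rotation {T : ℝ} [hT : Fact (0 < T)] {μ : Measure ℂ}
    [IsProbabilityMeasure μ] (hμ : ∀ a : Circle, MeasurePreserving (rotation a) μ μ)
    (h₀ : μ {0} = 0) {S : Set ℂ} (hS : MeasurableSet S)
    (hcone : ∀ r : ℝ, 0 < r → ∀ z : ℂ, r • z ∈ S ↔ z ∈ S) :
    μ S = AddCircle.haarAddCircle {α : AddCircle T | (AddCircle.toCircle α : ℂ) ∈ S} := by
  have hmeas : MeasurableSet {p : AddCircle T × ℂ | (AddCircle.toCircle p.1 : ℂ) * p.2 ∈ S} :=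
    have : Continuous fun p : AddCircle T × ℂ ↦ (AddCircle.toCircle p.1 : ℂ) * p.2 := by fun_prop
    this.measurable hS
  have orbit {z : ℂ} (hz : z ≠ 0) :
      AddCircle.haarAddCircle {α : AddCircle T | (AddCircle.toCircle α : ℂ) * z ∈ S} =
        AddCircle.haarAddCircle {α : AddCircle T | (AddCircle.toCircle α : ℂ) ∈ S} := by
    obtain ⟨β, hβ⟩ := (AddCircle.homeomorphCircle hT.out.ne').surjective (Circle.exp z.arg)
    rw [← measure_preimage_add_right _ β {α : AddCircle T | (AddCircle.toCircle α : ℂ) ∈ S}]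
    congr 1 with α
    have polar : (AddCircle.toCircle α : ℂ) * z = ‖z‖ • (AddCircle.toCircle (α + β) : ℂ) := by
      rw [AddCircle.toCircle_add, ← AddCircle.homeomorphCircle_apply hT.out.ne' β, hβ]
      nth_rw 1 [← Complex.norm_mul_exp_arg_mul_I z]
      simp only [Circle.coe_mul, Circle.coe_exp, Complex.real_smul]
      ring
    simp only [Set.mem_ofPred_eq, Set.mem_preimage, polar, hcone _ (norm_pos_iff.2 hz)]
  calc
    μ S = ∫⁻ α : AddCircle T,
        μ (rotation (AddCircle.toCircle α) ⁻¹' S) ∂AddCircle.haarAddCircle := by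
      simp [(hμ _).measure_preimage hS.nullMeasurableSet]
    _ = (AddCircle.haarAddCircle.prod μ)
        {p : AddCircle T × ℂ | (AddCircle.toCircle p.1 : ℂ) * p.2 ∈ S} := by
      rw [Measure.prod_apply hmeas]; rfl
    _ = ∫⁻ z,
        AddCircle.haarAddCircle {α : AddCircle T | (AddCircle.toCircle α : ℂ) * z ∈ S} ∂μ := by
      rw [Measure.prod_apply_symm hmeas]; rfl
    _ = ∫⁻ _, AddCircle.haarAddCircle {α : AddCircle T | (AddCircle.toCircle α : ℂ) ∈ S} ∂μ :=
      lintegral_congr_ae (by filter_upwards [compl_mem_ae_iff.2 h₀] with z hz using orbit hz)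
    _ = AddCircle.haarAddCircle {α : AddCircle T | (AddCircle.toCircle α : ℂ) ∈ S} := by simp

section StdGaussian

variable {E : Type*} [NormedAddCommGroup E] [InnerProductSpace ℝ E] [FiniteDimensional ℝ E]
  [MeasurableSpace E] [BorelSpace E]

lemma stdGaussian_singleton [Nontrivial E] (x : E) : stdGaussian E {x} = 0 := by
  obtain ⟨v, hv⟩ := exists_ne (0 : E)
  have hmap : (stdGaussian E).map (innerSL ℝ v) = gaussianReal 0 (‖v‖ ^ 2).toNNReal := by
    rw [IsGaussian.map_eq_gaussianReal, integral_strongDual_stdGaussian,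
      variance_dual_stdGaussian, innerSL_apply_norm]
  have := nullSingletonClass_gaussianReal (μ := 0)
    (Real.toNNReal_pos.2 (pow_pos (norm_pos_iff.2 hv) 2)).ne'
  refine measure_mono_null (t := innerSL ℝ v ⁻¹' {innerSL ℝ v x}) (by simp) ?_
  rw [← Measure.map_apply (by fun_prop) (measurableSet_singleton _), hmap, measure_singleton]

lemma covariance_inner_stdGaussian (x y : E) :
    cov[fun z ↦ ⟪x, z⟫, fun z ↦ ⟪y, z⟫; stdGaussian E] = ⟪x, y⟫ := by
  rw [← covarianceBilin_apply_eq_cov IsGaussian.memLp_two_id, covarianceBilin_stdGaussian]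
  rfl

end StdGaussian

section DoubleWedge

open Real

local instance : Fact (0 < 2 * π) := ⟨two_pi_pos⟩

lemma cos_pos_iff_abs_lt_pi_div_two {s : ℝ} (hs : |s| ≤ π + π / 2) :
    0 < cos s ↔ |s| < π / 2 := by
  rw [← cos_abs]
  constructor
  · contrapose!
    exact fun h ↦ cos_nonpos_of_pi_div_two_le_of_le h hs
  · exact fun h ↦ cos_pos_of_mem_Ioo ⟨by linarith [abs_nonneg s, pi_pos], h⟩

lemma inner_circleExp_circleExp (s t : ℝ) :
    ⟪(Circle.exp s : ℂ), (Circle.exp t : ℂ)⟫ = cos (t - s) := by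
  rw [Complex.inner, ← Circle.coe_inv_eq_conj, ← Circle.coe_mul, ← Circle.exp_neg,
    ← Circle.exp_add, Circle.coe_exp, Complex.exp_ofReal_mul_I_re, ← sub_eq_add_neg]

lemma volume_real_Ioo_symmDiff_Ioo_add {a b θ : ℝ} (h₀ : 0 ≤ θ) (h₁ : θ ≤ b - a) :
    volume.real (Set.Ioo a b ∆ Set.Ioo (a + θ) (b + θ)) = 2 * θ := by
  have overlap : Set.Ioo a b ∩ Set.Ioo (a + θ) (b + θ) = Set.Ioo (a + θ) b := by
    rw [Set.Ioo_inter_Ioo, max_eq_right (by linarith), min_eq_left (by linarith)]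
  have left := measureReal_inter_add_sdiff (μ := volume) (s := Set.Ioo a b)
    (t := Set.Ioo (a + θ) (b + θ)) measurableSet_Ioo measure_Ioo_lt_top.ne
  have right := measureReal_inter_add_sdiff (μ := volume) (s := Set.Ioo (a + θ) (b + θ))
    (t := Set.Ioo a b) measurableSet_Ioo measure_Ioo_lt_top.ne
  rw [overlap, Real.volume_real_Ioo_of_le (by linarith),
    Real.volume_real_Ioo_of_le (by linarith)] at left
  rw [Set.inter_comm, overlap, Real.volume_real_Ioo_of_le (by linarith),
    Real.volume_real_Ioo_of_le (by linarith)] at right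
  rw [measureReal_symmDiff_eq measurableSet_Ioo measurableSet_Ioo measure_Ioo_lt_top.ne
    measure_Ioo_lt_top.ne]
  linarith

/-- The set of points of the plane at which the linear forms `⟪1, ·⟫` and `⟪exp (iθ), ·⟫` have
different signs, up to zeros of the forms. -/
def doubleWedge (θ : ℝ) : Set ℂ :=
  {z | 0 < ⟪(Circle.exp 0 : ℂ), z⟫} ∆ {z | 0 < ⟪(Circle.exp θ : ℂ), z⟫}

lemma measurableSet_doubleWedge (θ : ℝ) : MeasurableSet (doubleWedge θ) :=
  (measurableSet_lt (by fun_prop) (by fun_prop)).symmDiff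
    (measurableSet_lt (by fun_prop) (by fun_prop))

lemma smul_mem_doubleWedge_iff {θ r : ℝ} (hr : 0 < r) {z : ℂ} :
    r • z ∈ doubleWedge θ ↔ z ∈ doubleWedge θ := by
  simp only [doubleWedge, Set.mem_symmDiff, Set.mem_ofPred_eq, real_inner_smul_right,
    mul_pos_iff_of_pos_left hr]

lemma inner_circleExp_circleExp_pos_iff {s t : ℝ} (h : |t - s| ≤ π + π / 2) :
    0 < ⟪(Circle.exp s : ℂ), (Circle.exp t : ℂ)⟫ ↔
      t ∈ Set.Ioo (-(π / 2) + s) (π / 2 + s) := by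
  rw [inner_circleExp_circleExp, cos_pos_iff_abs_lt_pi_div_two h, abs_lt, Set.mem_Ioo,
    lt_sub_iff_add_lt, sub_lt_iff_lt_add]

lemma circleExp_mem_doubleWedge_iff {θ t : ℝ} (h₀ : 0 ≤ θ) (h₁ : θ ≤ π)
    (ht : t ∈ Set.Ioc (-(π / 2)) (-(π / 2) + 2 * π)) :
    (Circle.exp t : ℂ) ∈ doubleWedge θ ↔
      t ∈ Set.Ioo (-(π / 2)) (π / 2) ∆ Set.Ioo (-(π / 2) + θ) (π / 2 + θ) := by
  have h0 : |t - 0| ≤ π + π / 2 := abs_le.2 ⟨by linarith [ht.1], by linarith [ht.2]⟩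
  have hθ : |t - θ| ≤ π + π / 2 := abs_le.2 ⟨by linarith [ht.1], by linarith [ht.2]⟩
  simp only [doubleWedge, Set.mem_symmDiff, Set.mem_ofPred_eq,
    inner_circleExp_circleExp_pos_iff h0, inner_circleExp_circleExp_pos_iff hθ, add_zero]

lemma haarAddCircle_real_toCircle_mem_doubleWedge {θ : ℝ} (h₀ : 0 ≤ θ) (h₁ : θ ≤ π) :
    AddCircle.haarAddCircle.real
      {α : AddCircle (2 * π) | (AddCircle.toCircle α : ℂ) ∈ doubleWedge θ} = θ / π := by
  set S : Set (AddCircle (2 * π)) := {α | (AddCircle.toCircle α : ℂ) ∈ doubleWedge θ}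
  have hS : MeasurableSet S :=
    (by fun_prop : Continuous fun α : AddCircle (2 * π) ↦ (AddCircle.toCircle α : ℂ)).measurable
      (measurableSet_doubleWedge θ)
  have arcs : QuotientAddGroup.mk ⁻¹' S ∩ Set.Ioc (-(π / 2)) (-(π / 2) + 2 * π) =
      Set.Ioo (-(π / 2)) (π / 2) ∆ Set.Ioo (-(π / 2) + θ) (π / 2 + θ) := by
    have mem_S (t : ℝ) : (t : AddCircle (2 * π)) ∈ S ↔ (Circle.exp t : ℂ) ∈ doubleWedge θ := by
      rw [Set.mem_ofPred_eq, AddCircle.toCircle_apply_mk, div_self two_pi_pos.ne', one_mul]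
    have subset_Ioc : Set.Ioo (-(π / 2)) (π / 2) ∆ Set.Ioo (-(π / 2) + θ) (π / 2 + θ) ⊆
        Set.Ioc (-(π / 2)) (-(π / 2) + 2 * π) := by
      refine Set.symmDiff_subset_union.trans (Set.union_subset ?_ ?_) <;>
        refine Set.Ioo_subset_Ioc_self.trans (Set.Ioc_subset_Ioc ?_ ?_) <;> linarith
    ext t
    rw [← Set.inter_eq_left.2 subset_Ioc]
    exact and_congr_left fun ht ↦ (mem_S t).trans (circleExp_mem_doubleWedge_iff h₀ h₁ ht)
  have hvol : 2 * π * AddCircle.haarAddCircle.real S = 2 * θ := by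
    rw [← volume_real_Ioo_symmDiff_Ioo_add h₀ (by linarith : θ ≤ π / 2 - -(π / 2)), ← arcs,
      measureReal_def, measureReal_def, ← AddCircle.add_projection_respects_measure _ _ hS,
      AddCircle.volume_eq_smul_haarAddCircle, Measure.smul_apply, smul_eq_mul, ENNReal.toReal_mul,
      ENNReal.toReal_ofReal two_pi_pos.le]
  rw [eq_div_iff pi_ne_zero]
  linarith

lemma stdGaussian_real_doubleWedge {θ : ℝ} (h₀ : 0 ≤ θ) (h₁ : θ ≤ π) :
    (stdGaussian ℂ).real (doubleWedge θ) = θ / π := by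
  rw [← haarAddCircle_real_toCircle_mem_doubleWedge h₀ h₁, measureReal_def, measureReal_def,
    measure_eq_haarAddCircle_of_rotation (T := 2 * π)
      (fun a ↦ ⟨(rotation a).continuous.measurable, stdGaussian_map (rotation a)⟩)
      (stdGaussian_singleton 0) (measurableSet_doubleWedge θ)
      fun _ hr _ ↦ smul_mem_doubleWedge_iff hr]

end DoubleWedge

section Sheppard

variable {Ω Ω' : Type*} [MeasurableSpace Ω] [MeasurableSpace Ω'] {P : Measure Ω} {Q : Measure Ω'}

lemma identDistrib_pi_of_hasGaussianLaw {ι : Type*} [Finite ι] {X : ι → Ω → ℝ} {Y : ι → Ω' → ℝ}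
    (hX : HasGaussianLaw (fun ω ↦ (X · ω)) P) (hY : HasGaussianLaw (fun ω ↦ (Y · ω)) Q)
    (hmean : ∀ i, P[X i] = Q[Y i]) (hcov : ∀ i j, cov[X i, X j; P] = cov[Y i, Y j; Q]) :
    IdentDistrib (fun ω ↦ (X · ω)) (fun ω ↦ (Y · ω)) P Q := by
  have := Fintype.ofFinite ι
  have := hX.isProbabilityMeasure
  have := hY.isProbabilityMeasure
  have := (hX.toLp_pi 2).isGaussian_map
  have := (hY.toLp_pi 2).isGaussian_map
  have law : P.map (fun ω ↦ WithLp.toLp 2 (X · ω)) = Q.map (fun ω ↦ WithLp.toLp 2 (Y · ω)) := by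
    refine IsGaussian.ext ?_ ?_
    · simp only [id_eq]
      rw [integral_map (hX.toLp_pi 2).aemeasurable (by fun_prop),
        integral_map (hY.toLp_pi 2).aemeasurable (by fun_prop)]
      ext i
      rw [eval_integral_piLp fun i ↦ (hX.eval i).integrable,
        eval_integral_piLp fun i ↦ (hY.eval i).integrable]
      exact hmean i
    · ext s t
      rw [covarianceBilin_apply_pi fun i ↦ (hX.eval i).memLp_two,
        covarianceBilin_apply_pi fun i ↦ (hY.eval i).memLp_two]
      simp_rw [hcov]
  have ident : IdentDistrib (fun ω ↦ WithLp.toLp 2 (X · ω)) (fun ω ↦ WithLp.toLp 2 (Y · ω)) P Q :=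
    ⟨(hX.toLp_pi 2).aemeasurable, (hY.toLp_pi 2).aemeasurable, law⟩
  exact ident.comp (WithLp.measurable_ofLp 2 _)

lemma hasGaussianLaw_fin_two {X Y : Ω → ℝ} (hXY : HasGaussianLaw (fun ω ↦ (X ω, Y ω)) P) :
    HasGaussianLaw (fun ω ↦ (![X, Y] · ω)) P := by
  have eq_symm : (fun ω ↦ (![X, Y] · ω)) =
      fun ω ↦ (ContinuousLinearEquiv.finTwoArrow ℝ ℝ).symm (X ω, Y ω) := by
    ext ω i
    fin_cases i <;> rfl
  rw [eq_symm]
  exact hXY.map_equiv_fun _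

lemma identDistrib_prodMk_of_hasGaussianLaw {X Y : Ω → ℝ} {X' Y' : Ω' → ℝ}
    (hXY : HasGaussianLaw (fun ω ↦ (X ω, Y ω)) P) (hXY' : HasGaussianLaw (fun ω ↦ (X' ω, Y' ω)) Q)
    (hX : P[X] = Q[X']) (hY : P[Y] = Q[Y']) (hVarX : Var[X; P] = Var[X'; Q])
    (hVarY : Var[Y; P] = Var[Y'; Q]) (hcov : cov[X, Y; P] = cov[X', Y'; Q]) :
    IdentDistrib (fun ω ↦ (X ω, Y ω)) (fun ω ↦ (X' ω, Y' ω)) P Q := by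
  have ident := identDistrib_pi_of_hasGaussianLaw (hasGaussianLaw_fin_two hXY)
    (hasGaussianLaw_fin_two hXY')
    (Fin.forall_fin_two.2 ⟨hX, hY⟩) (by
      rw [Fin.forall_fin_two, Fin.forall_fin_two, Fin.forall_fin_two]
      simp [covariance_self hXY.fst.aemeasurable, covariance_self hXY.snd.aemeasurable,
        covariance_self hXY'.fst.aemeasurable, covariance_self hXY'.snd.aemeasurable, *,
        covariance_comm Y X, covariance_comm Y' X'])
  exact ident.comp (u := fun z ↦ (z 0, z 1)) (by fun_prop)

/-- Sheppard's formula, for a pair of centred Gaussian variables with correlation `cos θ`. -/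
lemma measureReal_symmDiff_pos_of_hasGaussianLaw {X Y : Ω → ℝ} {σ τ θ : ℝ}
    (hXY : HasGaussianLaw (fun ω ↦ (X ω, Y ω)) P) (hX : P[X] = 0) (hY : P[Y] = 0)
    (hσ : 0 < σ) (hτ : 0 < τ) (hVarX : Var[X; P] = σ ^ 2) (hVarY : Var[Y; P] = τ ^ 2)
    (hcov : cov[X, Y; P] = σ * τ * Real.cos θ) (h₀ : 0 ≤ θ) (h₁ : θ ≤ Real.pi) :
    P.real ({ω | 0 < X ω} ∆ {ω | 0 < Y ω}) = θ / Real.pi := by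
  let X' (z : ℂ) : ℝ := σ * ⟪(Circle.exp 0 : ℂ), z⟫
  let Y' (z : ℂ) : ℝ := τ * ⟪(Circle.exp θ : ℂ), z⟫
  have hXY' : HasGaussianLaw (fun z ↦ (X' z, Y' z)) (stdGaussian ℂ) :=
    IsGaussian.hasGaussianLaw_id.map ((σ • innerSL ℝ (Circle.exp 0 : ℂ)).prod
      (τ • innerSL ℝ (Circle.exp θ : ℂ)))
  have mean (w : ℂ) : ∫ z, ⟪w, z⟫ ∂(stdGaussian ℂ) = 0 :=
    integral_strongDual_stdGaussian (innerSL ℝ w)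
  have cov' (s t a b : ℝ) : cov[fun z ↦ a * ⟪(Circle.exp s : ℂ), z⟫,
      fun z ↦ b * ⟪(Circle.exp t : ℂ), z⟫; stdGaussian ℂ] = a * b * Real.cos (t - s) := by
    rw [covariance_const_mul_left, covariance_const_mul_right, covariance_inner_stdGaussian,
      inner_circleExp_circleExp, mul_assoc]
  have ident : IdentDistrib (fun ω ↦ (X ω, Y ω)) (fun z ↦ (X' z, Y' z)) P (stdGaussian ℂ) := by
    apply identDistrib_prodMk_of_hasGaussianLaw hXY hXY'
    · rw [hX, integral_const_mul, mean, mul_zero]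
    · rw [hY, integral_const_mul, mean, mul_zero]
    · rw [← covariance_self hXY'.fst.aemeasurable, cov', sub_self, Real.cos_zero, hVarX]; ring
    · rw [← covariance_self hXY'.snd.aemeasurable, cov', sub_self, Real.cos_zero, hVarY]; ring
    · rw [cov', hcov, sub_zero]
  have half (i : ℝ × ℝ → ℝ) (hi : Measurable i) : MeasurableSet {p | 0 < i p} :=
    measurableSet_lt measurable_const hi
  have wedge := ident.measure_mem_eq
    ((half _ measurable_fst).symmDiff (half _ measurable_snd))
  calc
    P.real ({ω | 0 < X ω} ∆ {ω | 0 < Y ω})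
      = (stdGaussian ℂ).real ({z | 0 < X' z} ∆ {z | 0 < Y' z}) := congrArg ENNReal.toReal wedge
    _ = (stdGaussian ℂ).real (doubleWedge θ) := by
      simp only [X', Y', mul_pos_iff_of_pos_left hσ, mul_pos_iff_of_pos_left hτ, doubleWedge]
    _ = θ / Real.pi := stdGaussian_real_doubleWedge h₀ h₁

lemma multivariateGaussian_gram_real_symmDiff_pos {V E : Type*} [Fintype V] [DecidableEq V]
    [NormedAddCommGroup E] [InnerProductSpace ℝ E] (x : V → E) {u v : V}
    (hu : x u ≠ 0) (hv : x v ≠ 0) :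
    (multivariateGaussian 0 (Matrix.gram ℝ x)).real ({ω | 0 < ω u} ∆ {ω | 0 < ω v}) =
      InnerProductGeometry.angle (x u) (x v) / Real.pi := by
  have hgram := Matrix.posSemidef_gram ℝ x
  have mean (w : V) : ∫ ω, ω w ∂(multivariateGaussian 0 (Matrix.gram ℝ x)) = 0 := by
    refine ((EuclideanSpace.proj w : EuclideanSpace ℝ V →L[ℝ] ℝ).integral_comp_id_comm
      IsGaussian.integrable_id).trans ?_
    rw [integral_id_multivariateGaussian, map_zero]
  have gaussian : HasGaussianLaw (fun ω : EuclideanSpace ℝ V ↦ (ω u, ω v))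
      (multivariateGaussian 0 (Matrix.gram ℝ x)) :=
    IsGaussian.hasGaussianLaw_id.map
      ((EuclideanSpace.proj u : EuclideanSpace ℝ V →L[ℝ] ℝ).prod (EuclideanSpace.proj v))
  apply measureReal_symmDiff_pos_of_hasGaussianLaw (σ := ‖x u‖) (τ := ‖x v‖) gaussian
    (mean u) (mean v) (norm_pos_iff.2 hu) (norm_pos_iff.2 hv)
  · rw [variance_eval_multivariateGaussian hgram, Matrix.gram_apply, real_inner_self_eq_norm_sq]
  · rw [variance_eval_multivariateGaussian hgram, Matrix.gram_apply, real_inner_self_eq_norm_sq]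
  · rw [covariance_eval_multivariateGaussian hgram, Matrix.gram_apply, mul_comm,
      InnerProductGeometry.cos_angle_mul_norm_mul_norm]
  · exact InnerProductGeometry.angle_nonneg _ _
  · exact InnerProductGeometry.angle_le_pi _ _

end Sheppard

section Cuts

variable {V : Type*} [DecidableEq V] (G : SimpleGraph V) [DecidableRel G.Adj]

lemma epairs_comm (A B : Finset V) : epairs G A B = epairs G B A := by
  refine card_bij' (fun p _ ↦ p.swap) (fun p _ ↦ p.swap) ?_ ?_ ?_ ?_ <;>
    simp +contextual [G.adj_comm]

variable [Fintype V]

lemma two_mul_epairs_compl (A : Finset V) :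
    2 * epairs G A Aᶜ =
      #{p ∈ (univ ×ˢ univ).filter (fun p : V × V ↦ G.Adj p.1 p.2) | p.1 ∈ A ↔ p.2 ∉ A} := by
  have out_or_in : {p ∈ (univ ×ˢ univ).filter (fun p : V × V ↦ G.Adj p.1 p.2) |
      p.1 ∈ A ↔ p.2 ∉ A} =
        ((A ×ˢ Aᶜ).filter fun p ↦ G.Adj p.1 p.2) ∪ ((Aᶜ ×ˢ A).filter fun p ↦ G.Adj p.1 p.2) := by
    ext p
    simp only [mem_filter, mem_union, mem_product, mem_univ, mem_compl]
    tauto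
  rw [out_or_in, card_union_of_disjoint, two_mul]
  · exact congrArg _ (epairs_comm G A Aᶜ)
  · exact disjoint_filter_filter (disjoint_product.2 (.inl disjoint_compl_right))

lemma exists_sum_measureReal_symmDiff_le_epairs_compl {Ω : Type*} [MeasurableSpace Ω]
    (P : Measure Ω) [IsProbabilityMeasure P] {S : V → Set Ω} (hS : ∀ v, MeasurableSet (S v)) :
    ∃ A : Finset V,
      (1 / 2 : ℝ) * ∑ p ∈ (univ ×ˢ univ).filter (fun p : V × V ↦ G.Adj p.1 p.2),
        P.real (S p.1 ∆ S p.2) ≤ epairs G A Aᶜ := by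
  classical
  let A (ω : Ω) : Finset V := {v | ω ∈ S v}
  let pairs := (univ ×ˢ univ).filter fun p : V × V ↦ G.Adj p.1 p.2
  have hmeas (p : V × V) : MeasurableSet (S p.1 ∆ S p.2) := (hS p.1).symmDiff (hS p.2)
  have hint (p : V × V) : Integrable ((S p.1 ∆ S p.2).indicator (1 : Ω → ℝ)) P :=
    (integrable_const 1).indicator (hmeas p)
  have count (ω : Ω) : (2 * epairs G (A ω) (A ω)ᶜ : ℝ) =
      ∑ p ∈ pairs, (S p.1 ∆ S p.2).indicator 1 ω := by
    have separated (p : V × V) : (p.1 ∈ A ω ↔ p.2 ∉ A ω) ↔ ω ∈ S p.1 ∆ S p.2 := by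
      simp only [A, mem_filter, mem_univ, true_and, Set.mem_symmDiff]
      tauto
    have h := two_mul_epairs_compl G (A ω)
    simp only [separated] at h
    calc
      (2 * epairs G (A ω) (A ω)ᶜ : ℝ) = #{p ∈ pairs | ω ∈ S p.1 ∆ S p.2} := by exact_mod_cast h
      _ = ∑ p ∈ pairs, (S p.1 ∆ S p.2).indicator 1 ω := by
        simp_rw [natCast_card_filter, Set.indicator_apply, Pi.one_apply]
  have expectation : ∫ ω, (2 * epairs G (A ω) (A ω)ᶜ : ℝ) ∂P =
      ∑ p ∈ pairs, P.real (S p.1 ∆ S p.2) := by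
    simp_rw [count, integral_finsetSum _ fun p _ ↦ hint p, integral_indicator_one (hmeas _)]
  obtain ⟨ω, hω⟩ := exists_integral_le (μ := P) (f := fun ω ↦ (2 * epairs G (A ω) (A ω)ᶜ : ℝ))
    (by simp_rw [count]; exact integrable_finsetSum _ fun p _ ↦ hint p)
  exact ⟨A ω, by linarith⟩

end Cuts

theorem stmt_18_general {V : Type*} [Fintype V] [DecidableEq V]
    (G : SimpleGraph V) [DecidableRel G.Adj]
    {E : Type*} [NormedAddCommGroup E] [InnerProductSpace ℝ E]
    (x : V → E) (hx : ∀ v, x v ≠ 0) :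
    ∃ A B : Finset V, A ∪ B = Finset.univ ∧ Disjoint A B ∧
      (G.edgeFinset.card : ℝ) / 2
        - (1 / Real.pi) * ((1 / 2 : ℝ) *
            ∑ p ∈ (Finset.univ ×ˢ Finset.univ).filter
              (fun p : V × V => G.Adj p.1 p.2),
              Real.arcsin (⟪x p.1, x p.2⟫ / (‖x p.1‖ * ‖x p.2‖)))
      ≤ (epairs G A B : ℝ) := by
  obtain ⟨A, hA⟩ := exists_sum_measureReal_symmDiff_le_epairs_compl G
    (multivariateGaussian 0 (Matrix.gram ℝ x)) (S := fun v ↦ {ω | 0 < ω v})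
    fun v ↦ measurableSet_lt (by fun_prop) (by fun_prop)
  refine ⟨A, Aᶜ, union_compl A, disjoint_compl_right, le_of_eq_of_le ?_ hA⟩
  have card_pairs : (2 * G.edgeFinset.card : ℝ) =
      #((univ ×ˢ univ).filter fun p : V × V ↦ G.Adj p.1 p.2) := by
    exact_mod_cast G.two_mul_card_edgeFinset
  have separation (p : V × V) : (multivariateGaussian 0 (Matrix.gram ℝ x)).real
      ({ω | 0 < ω p.1} ∆ {ω | 0 < ω p.2}) =
        1 / 2 - (1 / Real.pi) * Real.arcsin (⟪x p.1, x p.2⟫ / (‖x p.1‖ * ‖x p.2‖)) := by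
    rw [multivariateGaussian_gram_real_symmDiff_pos x (hx p.1) (hx p.2),
      InnerProductGeometry.angle, Real.arccos]
    field_simp
  simp_rw [separation, sum_sub_distrib, ← mul_sum, sum_const, nsmul_eq_mul, ← card_pairs]
  ring

/-- Goemans–Williamson type bound: for non-zero vectors `{x_u} ⊂ ℝ^N`, the graph `G`
with `m` edges has a cut of size at least
`m/2 − (1/π)·Σ_{uv∈E} arcsin(⟨x_u,x_v⟩/(‖x_u‖‖x_v‖))`
(the sum over edges is written as half the sum over ordered adjacent pairs). -/
theorem stmt_18 {V : Type*} [Fintype V] [DecidableEq V]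
    (G : SimpleGraph V) [DecidableRel G.Adj] {N : ℕ}
    (x : V → EuclideanSpace ℝ (Fin N)) (hx : ∀ v, x v ≠ 0) :
    ∃ A B : Finset V, A ∪ B = Finset.univ ∧ Disjoint A B ∧
      (G.edgeFinset.card : ℝ) / 2
        - (1 / Real.pi) * ((1 / 2 : ℝ) *
            ∑ p ∈ (Finset.univ ×ˢ Finset.univ).filter
              (fun p : V × V => G.Adj p.1 p.2),
              Real.arcsin (⟪x p.1, x p.2⟫ / (‖x p.1‖ * ‖x p.2‖)))
      ≤ (epairs G A B : ℝ) :=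
  stmt_18_general G x hx
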